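/- Let B ∈ ℝ^{k×r}, A ∈ ℝ^{r×d}, G ∈ ℝ^{k×d}, and let η ≥ 0 and constants C_A, C_B, Γ, c_A, c_B ∈ ℝ satisfy ‖A‖_F ≤ C_A, ‖B‖_F ≤ C_B, ‖G‖_F ≤ Γ, ⟨Aᵀ A, Gᵀ G⟩_F ≥ c_A ‖G‖_F², and ⟨G Gᵀ, B Bᵀ⟩_F ≥ c_B ‖G‖_F². Then ⟨(B − η G Aᵀ)(A − η Bᵀ G) − B A, G⟩_F ≤ η² C_A C_B Γ³ − η (c_A + c_B) ‖G‖_F². -/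

import Mathlib

open Matrix

attribute [local instance] Matrix.frobeniusNormedAddCommGroup Matrix.frobeniusNormedSpace

/-!
The increment of `W = W₀ + B A` expands as `-η (G Aᴴ A + B Bᴴ G) + η² G Aᴴ Bᴴ G`. Paired with `G`,
the first-order part is exactly the two quantities bounded below by `c_A` and `c_B`, while
Cauchy–Schwarz and submultiplicativity of the Frobenius norm control the second-order part.
-/

section FrobeniusNorm

variable {m n : Type*} [Fintype m] [Fintype n]

theorem frobenius_norm_eq_sqrt {E : Type*} [NormedAddCommGroup E] (X : Matrix m n E) :
    ‖X‖ = √(∑ p : m × n, ‖X p.1 p.2‖ ^ 2) := by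
  simp only [frobenius_norm_def, Real.sqrt_eq_rpow, Fintype.sum_prod_type, Real.rpow_ofNat]

theorem frobenius_norm_trace_mul_le {R : Type*} [NonUnitalNormedRing R]
    (X : Matrix m n R) (Y : Matrix n m R) : ‖(X * Y).trace‖ ≤ ‖X‖ * ‖Y‖ := by
  calc ‖(X * Y).trace‖
    _ = ‖∑ p : m × n, X p.1 p.2 * Yᵀ p.1 p.2‖ := by
      simp only [trace, diag_apply, mul_apply, transpose_apply, Fintype.sum_prod_type]
    _ ≤ ∑ p : m × n, ‖X p.1 p.2‖ * ‖Yᵀ p.1 p.2‖ := norm_sum_le_of_le _ fun _ _ ↦ norm_mul_le _ _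
    _ ≤ √(∑ p : m × n, ‖X p.1 p.2‖ ^ 2) * √(∑ p : m × n, ‖Yᵀ p.1 p.2‖ ^ 2) :=
      Real.sum_mul_le_sqrt_mul_sqrt _ _ _
    _ = ‖X‖ * ‖Y‖ := by
      rw [← frobenius_norm_eq_sqrt, ← frobenius_norm_eq_sqrt, frobenius_norm_transpose]

end FrobeniusNorm

/-- The change in the product `B * A` caused by one simultaneous gradient step of size `η` on both
low-rank factors, where `G` is the gradient with respect to the full weight. The adjoint replaces
the transpose, so that real and complex weights are covered alike. -/
def loraIncrement {S R k r d : Type*} [Fintype k] [Fintype r] [Fintype d] [Ring R] [Star R]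
    [SMul S R] (η : S) (B : Matrix k r R) (A : Matrix r d R) (G : Matrix k d R) : Matrix k d R :=
  (B - η • (G * Aᴴ)) * (A - η • (Bᴴ * G)) - B * A

section LoraIncrement

variable {k r d : Type*} [Fintype k] [Fintype r] [Fintype d]

theorem loraIncrement_eq {S R : Type*} [CommSemiring S] [Ring R] [Star R] [Algebra S R]
    (η : S) (B : Matrix k r R) (A : Matrix r d R) (G : Matrix k d R) :
    loraIncrement η B A G =
      η ^ 2 • (G * Aᴴ * (Bᴴ * G)) - η • (G * Aᴴ * A + B * (Bᴴ * G)) := by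
  simp only [loraIncrement, Matrix.sub_mul, Matrix.mul_sub, Matrix.smul_mul, Matrix.mul_smul,
    smul_sub, smul_add, smul_smul, pow_two]
  abel

theorem trace_conjTranspose_loraIncrement_mul {S R : Type*} [CommSemiring S] [Star S]
    [TrivialStar S] [CommRing R] [StarRing R] [Algebra S R] [StarModule S R]
    (η : S) (B : Matrix k r R) (A : Matrix r d R) (G : Matrix k d R) :
    ((loraIncrement η B A G)ᴴ * G).trace =
      η ^ 2 • ((G * Aᴴ * (Bᴴ * G))ᴴ * G).trace -
        η • (((Aᴴ * A)ᴴ * (Gᴴ * G)).trace + ((G * Gᴴ)ᴴ * (B * Bᴴ)).trace) := by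
  have pairing_A : (G * Aᴴ * A)ᴴ * G = (Aᴴ * A)ᴴ * (Gᴴ * G) := by
    simp only [conjTranspose_mul, Matrix.mul_assoc]
  have pairing_B : ((B * (Bᴴ * G))ᴴ * G).trace = ((G * Gᴴ)ᴴ * (B * Bᴴ)).trace := by
    calc ((B * (Bᴴ * G))ᴴ * G).trace
      _ = (Gᴴ * (B * Bᴴ) * G).trace := by
        simp only [conjTranspose_mul, conjTranspose_conjTranspose, Matrix.mul_assoc]
      _ = (G * Gᴴ * (B * Bᴴ)).trace := trace_mul_cycle _ _ _
      _ = ((G * Gᴴ)ᴴ * (B * Bᴴ)).trace := by rw [(isHermitian_mul_conjTranspose_self G).eq]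
  rw [loraIncrement_eq, ← pairing_A, ← pairing_B]
  simp only [conjTranspose_sub, conjTranspose_add, conjTranspose_smul, star_trivial,
    Matrix.sub_mul, Matrix.add_mul, Matrix.smul_mul, trace_sub, trace_add, trace_smul]

variable {𝕜 : Type*} [RCLike 𝕜]

theorem norm_trace_loraIncrement_quadratic_le
    (B : Matrix k r 𝕜) (A : Matrix r d 𝕜) (G : Matrix k d 𝕜) :
    ‖((G * Aᴴ * (Bᴴ * G))ᴴ * G).trace‖ ≤ ‖A‖ * ‖B‖ * ‖G‖ ^ 3 := by
  calc ‖((G * Aᴴ * (Bᴴ * G))ᴴ * G).trace‖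
    _ ≤ ‖(G * Aᴴ * (Bᴴ * G))ᴴ‖ * ‖G‖ := frobenius_norm_trace_mul_le _ _
    _ = ‖G * Aᴴ * (Bᴴ * G)‖ * ‖G‖ := by rw [frobenius_norm_conjTranspose]
    _ ≤ ‖G * Aᴴ‖ * ‖Bᴴ * G‖ * ‖G‖ := by gcongr; exact frobenius_norm_mul _ _
    _ ≤ (‖G‖ * ‖Aᴴ‖) * (‖Bᴴ‖ * ‖G‖) * ‖G‖ := by gcongr <;> exact frobenius_norm_mul _ _
    _ = ‖A‖ * ‖B‖ * ‖G‖ ^ 3 := by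
      rw [frobenius_norm_conjTranspose, frobenius_norm_conjTranspose]
      ring

theorem re_trace_conjTranspose_loraIncrement_mul_le
    (η : ℝ) (B : Matrix k r 𝕜) (A : Matrix r d 𝕜) (G : Matrix k d 𝕜) :
    RCLike.re ((loraIncrement η B A G)ᴴ * G).trace ≤
      η ^ 2 * (‖A‖ * ‖B‖ * ‖G‖ ^ 3) -
        η * (RCLike.re ((Aᴴ * A)ᴴ * (Gᴴ * G)).trace +
          RCLike.re ((G * Gᴴ)ᴴ * (B * Bᴴ)).trace) := by
  rw [trace_conjTranspose_loraIncrement_mul, map_sub, RCLike.smul_re, RCLike.smul_re, map_add]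
  gcongr
  exact (RCLike.re_le_norm _).trans (norm_trace_loraIncrement_quadratic_le B A G)

theorem fedsa_lora_descent_inner_bound_general
    (B : Matrix k r 𝕜) (A : Matrix r d 𝕜) (G : Matrix k d 𝕜) (η : ℝ) (hη : 0 ≤ η)
    (CA CB Γ cA cB : ℝ)
    (hA : ‖A‖ ≤ CA) (hB : ‖B‖ ≤ CB) (hG : ‖G‖ ≤ Γ)
    (hcA : cA * ‖G‖ ^ 2 ≤ RCLike.re ((Aᴴ * A)ᴴ * (Gᴴ * G)).trace)
    (hcB : cB * ‖G‖ ^ 2 ≤ RCLike.re ((G * Gᴴ)ᴴ * (B * Bᴴ)).trace) :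
    RCLike.re ((loraIncrement η B A G)ᴴ * G).trace ≤
      η ^ 2 * CA * CB * Γ ^ 3 - η * (cA + cB) * ‖G‖ ^ 2 := by
  have hCA : 0 ≤ CA := (norm_nonneg A).trans hA
  have hCB : 0 ≤ CB := (norm_nonneg B).trans hB
  calc RCLike.re ((loraIncrement η B A G)ᴴ * G).trace
    _ ≤ η ^ 2 * (‖A‖ * ‖B‖ * ‖G‖ ^ 3) -
        η * (RCLike.re ((Aᴴ * A)ᴴ * (Gᴴ * G)).trace +
          RCLike.re ((G * Gᴴ)ᴴ * (B * Bᴴ)).trace) :=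
      re_trace_conjTranspose_loraIncrement_mul_le η B A G
    _ ≤ η ^ 2 * (CA * CB * Γ ^ 3) - η * (cA * ‖G‖ ^ 2 + cB * ‖G‖ ^ 2) := by gcongr
    _ = η ^ 2 * CA * CB * Γ ^ 3 - η * (cA + cB) * ‖G‖ ^ 2 := by ring

end LoraIncrement

/-- One-step descent inner product bound: under the bounded-factor,
bounded-gradient and eigenvalue-type assumptions,
`⟨(B − η G Aᵀ)(A − η Bᵀ G) − B A, G⟩_F ≤ η² C_A C_B Γ³ − η (c_A + c_B) ‖G‖_F²`. -/
theorem fedsa_lora_descent_inner_bound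
    (k r d : ℕ) (B : Matrix (Fin k) (Fin r) ℝ) (A : Matrix (Fin r) (Fin d) ℝ)
    (G : Matrix (Fin k) (Fin d) ℝ) (η : ℝ) (hη : 0 ≤ η)
    (CA CB Γ cA cB : ℝ)
    (hA : ‖A‖ ≤ CA) (hB : ‖B‖ ≤ CB) (hG : ‖G‖ ≤ Γ)
    (hcA : cA * ‖G‖ ^ 2 ≤ ((Aᵀ * A)ᵀ * (Gᵀ * G)).trace)
    (hcB : cB * ‖G‖ ^ 2 ≤ ((G * Gᵀ)ᵀ * (B * Bᵀ)).trace) :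
    (((B - η • (G * Aᵀ)) * (A - η • (Bᵀ * G)) - B * A)ᵀ * G).trace ≤
      η ^ 2 * CA * CB * Γ ^ 3 - η * (cA + cB) * ‖G‖ ^ 2 := by
  simpa only [conjTranspose_eq_transpose_of_trivial, RCLike.re_to_real, loraIncrement] using
    fedsa_lora_descent_inner_bound_general B A G η hη CA CB Γ cA cB hA hB hG hcA hcB
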